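/- arXiv:2402.14711 — 2 statements merged into one kernel-verified Lean document; each statement's English description precedes it below -/
import Mathlib

section
/- Let A be a real n×n matrix, C a real p×n matrix, N ∈ ℕ, x₀ ∈ ℝⁿ a vector, and ε ∈ ℝ with ε ≠ 0. For each k < N define ΔY_k : Matrix (Fin p) (Fin n) ℝ whose (a,i) entry is (C*A^k).mulVec (x₀ + ε • e_i) a − (C*A^k).mulVec (x₀ − ε • e_i) a, where e_i is the i-th standard basis vector. Then the empirical observability Gramian equals the linear observability Gramian exactly: (1/(4ε²)) • Σ_{k=0}^{N-1} ΔY_kᵀ * ΔY_k = Σ_{k=0}^{N-1} (C*A^k)ᵀ * (C*A^k). -/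
open Matrix

/-- For an LTI system `(A, C)`, the empirical observability Gramian built from central
differences of the outputs at `x₀ ± ε e_i` equals the linear observability Gramian
exactly, for any `ε ≠ 0` and any initial state `x₀`. -/
theorem empGram_eq_linear_obsGram {n p : ℕ} (N : ℕ)
    (A : Matrix (Fin n) (Fin n) ℝ) (C : Matrix (Fin p) (Fin n) ℝ)
    (x₀ : Fin n → ℝ) (ε : ℝ) (hε : ε ≠ 0)
    (ΔY : ℕ → Matrix (Fin p) (Fin n) ℝ)
    (hΔY : ∀ (k : ℕ) (a : Fin p) (i : Fin n),
      ΔY k a i = (C * A ^ k).mulVec (x₀ + ε • (Pi.single i 1 : Fin n → ℝ)) a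
               - (C * A ^ k).mulVec (x₀ - ε • (Pi.single i 1 : Fin n → ℝ)) a) :
    (1 / (4 * ε ^ 2)) • ∑ k ∈ Finset.range N, (ΔY k)ᵀ * ΔY k
      = ∑ k ∈ Finset.range N, (C * A ^ k)ᵀ * (C * A ^ k) := by
  -- By linearity the central difference has no error term: `x₀` cancels.
  have hY : ∀ k, ΔY k = (2 * ε) • (C * A ^ k) := by
    intro k
    ext a i
    rw [hΔY, mulVec_add, mulVec_sub, mulVec_smul, mulVec_single_one]
    simp only [Pi.add_apply, Pi.sub_apply, Pi.smul_apply, Matrix.smul_apply, col_apply,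
      smul_eq_mul]
    ring
  rw [Finset.smul_sum]
  refine Finset.sum_congr rfl fun k _ => ?_
  rw [hY, transpose_smul, Matrix.smul_mul, Matrix.mul_smul, smul_smul, smul_smul]
  have h : 1 / (4 * ε ^ 2) * (2 * ε) * (2 * ε) = 1 := by
    field_simp
    norm_num
  rw [h, one_smul]
end

section
/- Let f̃ : ℝⁿ → ℝⁿ be differentiable everywhere, g(x) = x + f̃(x), φ_k = g^[k], and let C : ℝⁿ →L[ℝ] ℝᵖ be a continuous linear output map. Fix x₀ ∈ ℝⁿ and N ∈ ℕ. For ε ≠ 0 define the empirical Gramian entries W^ε_{ij} = (1/(4ε²)) Σ_{k<N} ⟨C(φ_k(x₀ + ε•e_i)) − C(φ_k(x₀ − ε•e_i)), C(φ_k(x₀ + ε•e_j)) − C(φ_k(x₀ − ε•e_j))⟩, and the variational Gramian entries (V_o)_{ij} = Σ_{k<N} ⟨C(Dφ_k(x₀)(e_i)), C(Dφ_k(x₀)(e_j))⟩, where e_i is the i-th standard basis vector. Then for every pair of indices i, j, the function ε ↦ W^ε_{ij} tends to (V_o)_{ij} as ε → 0 within ε ≠ 0 (i.e., Tendsto along 𝓝[≠]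 0). -/
/-! The flow maps are iterates of a differentiable map, hence differentiable, so for each `k` the
central difference quotient `(2ε)⁻¹ • (C (φ k (x₀ + ε • v)) - C (φ k (x₀ - ε • v)))` tends to
`C (Dφ_k(x₀) v)` (`tendsto_central_diff`). Since `1 / (4ε²) = (2ε)⁻¹ * (2ε)⁻¹`, each Gramian entry
is a finite sum of inner products of such quotients, and the inner product is continuous. -/

open scoped RealInnerProductSpace

/-- The symmetric difference quotient in direction `v` converges to the derivative along `v`:
`t ↦ F (x + t • v) - F (x - t • v)` vanishes at `0` and has derivative `2 • F' v` there. -/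
theorem tendsto_central_diff {E G : Type*} [NormedAddCommGroup E] [NormedSpace ℝ E]
    [NormedAddCommGroup G] [NormedSpace ℝ G] {F : E → G} {F' : E →L[ℝ] G} {x : E}
    (hF : HasFDerivAt F F' x) (v : E) :
    Filter.Tendsto (fun t : ℝ => (2 * t)⁻¹ • (F (x + t • v) - F (x - t • v)))
      (nhdsWithin (0 : ℝ) {0}ᶜ) (nhds (F' v)) := by
  have h1 : HasDerivAt (fun t : ℝ => F (x + t • v)) (F' v) 0 := hF.hasLineDerivAt v
  have h2 : HasDerivAt (fun t : ℝ => F (x + t • -v)) (F' (-v)) 0 := hF.hasLineDerivAt (-v)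
  have h3 := (hasDerivAt_iff_tendsto_slope_zero.1 (h1.sub h2)).const_smul (2⁻¹ : ℝ)
  have hv : (2⁻¹ : ℝ) • (F' v - F' (-v)) = F' v := by
    rw [map_neg, sub_neg_eq_add, ← two_smul ℝ (F' v), smul_smul]
    norm_num
  rw [hv] at h3
  refine h3.congr fun t => ?_
  simp [smul_smul, mul_comm, sub_eq_add_neg]

/-- As `ε → 0` (within `ε ≠ 0`), each entry of the empirical observability Gramian of the
nonlinear system `x_{k+1} = x_k + f̃(x_k)`, `y_k = C x_k` converges to the corresponding
entry of the variational Gramian built from the Fréchet derivatives of the flow. -/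
theorem empGram_tendsto_varGram {n p : ℕ} (N : ℕ)
    (f : EuclideanSpace ℝ (Fin n) → EuclideanSpace ℝ (Fin n))
    (hf : Differentiable ℝ f)
    (g : EuclideanSpace ℝ (Fin n) → EuclideanSpace ℝ (Fin n))
    (hg : g = fun x => x + f x)
    (φ : ℕ → EuclideanSpace ℝ (Fin n) → EuclideanSpace ℝ (Fin n))
    (hφ : ∀ k, φ k = g^[k])
    (C : EuclideanSpace ℝ (Fin n) →L[ℝ] EuclideanSpace ℝ (Fin p))
    (x₀ : EuclideanSpace ℝ (Fin n))
    (e : Fin n → EuclideanSpace ℝ (Fin n))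
    (he : ∀ i, e i = EuclideanSpace.single i (1 : ℝ)) :
    ∀ i j : Fin n,
      Filter.Tendsto
        (fun ε : ℝ =>
          (1 / (4 * ε ^ 2)) *
            ∑ k ∈ Finset.range N,
              ⟪C (φ k (x₀ + ε • e i)) - C (φ k (x₀ - ε • e i)),
                C (φ k (x₀ + ε • e j)) - C (φ k (x₀ - ε • e j))⟫)
        (nhdsWithin (0 : ℝ) {0}ᶜ)
        (nhds (∑ k ∈ Finset.range N,
          ⟪C (fderiv ℝ (φ k) x₀ (e i)), C (fderiv ℝ (φ k) x₀ (e j))⟫)) := by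
  intro i j
  have hC : ∀ k, HasFDerivAt (fun x => C (φ k x)) (C.comp (fderiv ℝ (φ k) x₀)) x₀ := by
    intro k
    have hd : Differentiable ℝ (φ k) := by
      rw [hφ k, hg]
      exact (differentiable_id.add hf).iterate k
    exact C.hasFDerivAt.comp x₀ (hd x₀).hasFDerivAt
  have key := tendsto_finsetSum (Finset.range N) fun k _ =>
    (tendsto_central_diff (hC k) (e i)).inner (𝕜 := ℝ) (tendsto_central_diff (hC k) (e j))
  refine key.congr fun ε => ?_
  rw [Finset.mul_sum]
  refine Finset.sum_congr rfl fun k _ => ?_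
  rw [real_inner_smul_left, real_inner_smul_right, ← mul_assoc]
  congr 1
  rw [one_div, ← mul_inv]
  congr 1
  ring
end
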